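/- arXiv:1606.07948 — 4 statements merged into one kernel-verified Lean document; each statement's English description precedes it below -/
import Mathlib

section
/- Let σ > 0, h > 0 and z ∈ ℝ. If ε is a Laplace(σ) random variable with density f_ε(e) = e^{−|e|/σ}/(2σ), then E[𝒦^ε_h((z − ε)/h)] = ∫_ℝ 𝒦^ε_h((z − e)/h) f_ε(e) de = Φ(z/h). In particular, in the measurement error model Y = X + ε with ε independent of X, E[𝒦^ε_h((x − Y)/h) | X] = Φ((x − X)/h) almost surely, and hence E[𝒦^ε_h((x − Y)/h)] = E[Φ((x − X)/h)]. -/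
/-!
Write `g e = Φ((z - e)/h)`. Since `φ' (u) = -u φ(u)`, the kernel is chosen so that
`𝒦^ε_h((z - e)/h) = g e - σ² g'' e`: it undoes the Laplace convolution, whose Fourier multiplier is
`1 / (1 + σ² t²)`. With `f` the Laplace density, `(g - σ² g'') f` has the antiderivative
`-(σ² g' + σ g) f` on the right half-line, where `f' = -f/σ`, and `(σ g - σ² g') f` on the left one,
where `f' = f/σ`. Both vanish at infinity because `g` and `g'` are bounded, so only the boundary
terms at `0` remain, the `g' 0` contributions cancel, and what is left is `g 0 = Φ(z/h)`
(`integral_laplaceKeps_mul_density`).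

By independence the conditional law of `ε` given `X` is the Laplace law, and the conditional
expectation is the integral above with `z = x - X`.
-/

open MeasureTheory ProbabilityTheory Filter

/-- The standard normal distribution function `Φ(u) = (2π)^{-1/2} ∫_{-∞}^u e^{-t²/2} dt`. -/
noncomputable def stdNormalCDF (u : ℝ) : ℝ :=
  (Real.sqrt (2 * Real.pi))⁻¹ * ∫ t in Set.Iio u, Real.exp (-t ^ 2 / 2)

/-- The integrated Laplace deconvoluting kernel
`𝒦^ε_h(u) = Φ(u) + (2π)^{-1/2} (σ²/h²) u e^{-u²/2}`. -/
noncomputable def laplaceKeps (σ h u : ℝ) : ℝ :=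
  stdNormalCDF u + (Real.sqrt (2 * Real.pi))⁻¹ * (σ ^ 2 / h ^ 2) * u * Real.exp (-u ^ 2 / 2)

lemma integrable_exp_neg_sq_half : Integrable (fun t : ℝ => Real.exp (-t ^ 2 / 2)) := by
  have := integrable_exp_neg_mul_sq (b := 1 / 2) (by norm_num)
  refine this.congr (ae_of_all _ fun t => ?_)
  simp only
  congr 1
  ring

lemma hasDerivAt_stdNormalCDF (u : ℝ) :
    HasDerivAt stdNormalCDF ((Real.sqrt (2 * Real.pi))⁻¹ * Real.exp (-u ^ 2 / 2)) u := by
  have hcont : Continuous fun t : ℝ => Real.exp (-t ^ 2 / 2) := by fun_prop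
  have hI : ∀ v : ℝ, ∫ t in Set.Iio v, Real.exp (-t ^ 2 / 2)
      = (∫ t in Set.Iic 0, Real.exp (-t ^ 2 / 2)) + ∫ t in (0 : ℝ)..v, Real.exp (-t ^ 2 / 2) := by
    intro v
    rw [← integral_Iic_eq_integral_Iio, ← intervalIntegral.integral_Iic_sub_Iic
      integrable_exp_neg_sq_half.integrableOn integrable_exp_neg_sq_half.integrableOn]
    ring
  have hd : HasDerivAt (fun v : ℝ => ∫ t in Set.Iio v, Real.exp (-t ^ 2 / 2))
      (Real.exp (-u ^ 2 / 2)) u := by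
    simp_rw [hI]
    exact (intervalIntegral.integral_hasDerivAt_right (hcont.intervalIntegrable _ _)
      (hcont.stronglyMeasurableAtFilter _ _) hcont.continuousAt).const_add _
  exact hd.const_mul _

lemma continuous_stdNormalCDF : Continuous stdNormalCDF :=
  continuous_iff_continuousAt.2 fun u => (hasDerivAt_stdNormalCDF u).continuousAt

lemma exists_abs_stdNormalCDF_le : ∃ C, ∀ u, |stdNormalCDF u| ≤ C := by
  refine ⟨(Real.sqrt (2 * Real.pi))⁻¹ * ∫ t : ℝ, Real.exp (-t ^ 2 / 2), fun u => ?_⟩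
  unfold stdNormalCDF
  rw [abs_of_nonneg (mul_nonneg (by positivity)
    (integral_nonneg fun t => (Real.exp_pos _).le))]
  exact mul_le_mul_of_nonneg_left (setIntegral_le_integral integrable_exp_neg_sq_half
    (ae_of_all _ fun t => (Real.exp_pos _).le)) (by positivity)

lemma continuous_laplaceKeps (σ h : ℝ) : Continuous (laplaceKeps σ h) := by
  unfold laplaceKeps
  have := continuous_stdNormalCDF
  fun_prop

lemma abs_mul_exp_neg_sq_half_le (u : ℝ) : |u * Real.exp (-u ^ 2 / 2)| ≤ 1 := by
  rw [abs_mul, abs_of_pos (Real.exp_pos _)]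
  have h1 : |u| ≤ Real.exp (u ^ 2 / 2) := by
    have h2 := Real.add_one_le_exp (u ^ 2 / 2)
    nlinarith [sq_nonneg (|u| - 1), sq_abs u]
  calc |u| * Real.exp (-u ^ 2 / 2) ≤ Real.exp (u ^ 2 / 2) * Real.exp (-u ^ 2 / 2) := by gcongr
    _ = 1 := by rw [← Real.exp_add]; simp [neg_div]

lemma exists_abs_laplaceKeps_le (σ h : ℝ) : ∃ C, ∀ u, |laplaceKeps σ h u| ≤ C := by
  obtain ⟨C, hC⟩ := exists_abs_stdNormalCDF_le
  refine ⟨C + |(Real.sqrt (2 * Real.pi))⁻¹ * (σ ^ 2 / h ^ 2)| * 1, fun u => ?_⟩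
  unfold laplaceKeps
  refine (abs_add_le _ _).trans (add_le_add (hC u) ?_)
  rw [mul_assoc, abs_mul]
  exact mul_le_mul_of_nonneg_left (abs_mul_exp_neg_sq_half_le u) (abs_nonneg _)

lemma integrable_laplace_density {σ : ℝ} (hσ : 0 < σ) :
    Integrable (fun e : ℝ => Real.exp (-|e| / σ) / (2 * σ)) := by
  refine Integrable.div_const ?_ _
  rw [← integrableOn_univ, ← Set.Iic_union_Ioi (a := (0 : ℝ))]
  refine IntegrableOn.union ?_ ?_
  · refine (integrableOn_exp_mul_Iic (inv_pos.2 hσ) 0).congr_fun (fun e he => ?_) measurableSet_Iic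
    simp only [abs_of_nonpos (Set.mem_Iic.1 he)]
    congr 1
    ring
  · refine (integrableOn_exp_mul_Ioi (neg_lt_zero.2 (inv_pos.2 hσ)) 0).congr_fun
      (fun e he => ?_) measurableSet_Ioi
    simp only [abs_of_pos (Set.mem_Ioi.1 he)]
    congr 1
    ring

lemma integrable_laplaceKeps_mul_density {σ : ℝ} (hσ : 0 < σ) (h z : ℝ) :
    Integrable (fun e : ℝ => laplaceKeps σ h ((z - e) / h) * (Real.exp (-|e| / σ) / (2 * σ))) := by
  obtain ⟨C, hC⟩ := exists_abs_laplaceKeps_le σ h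
  refine (integrable_laplace_density hσ).bdd_mul (c := C) ?_ (ae_of_all _ fun e => hC _)
  have := continuous_laplaceKeps σ h
  exact Continuous.aestronglyMeasurable (by fun_prop)

/-- Both one-sided antiderivatives at once: `s = 1` serves the left half-line and `s = -1` the right
one, where the Laplace density is `exp (s e / σ) / (2σ)`. -/
lemma hasDerivAt_antideriv {σ h : ℝ} (hσ : 0 < σ) (hh : 0 < h) (z s : ℝ) (hs : s ^ 2 = 1) (e : ℝ) :
    HasDerivAt (fun e : ℝ => (s * σ * stdNormalCDF ((z - e) / h)
        + σ ^ 2 / h * ((Real.sqrt (2 * Real.pi))⁻¹ * Real.exp (-((z - e) / h) ^ 2 / 2)))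
          * (Real.exp (s * e / σ) / (2 * σ)))
      (laplaceKeps σ h ((z - e) / h) * (Real.exp (s * e / σ) / (2 * σ))) e := by
  have hu : HasDerivAt (fun e : ℝ => (z - e) / h) (-1 / h) e :=
    ((hasDerivAt_id e).const_sub z).div_const h
  have h1 := (hasDerivAt_stdNormalCDF ((z - e) / h)).comp e hu
  have h2 := (((hu.pow 2).neg.div_const 2).exp).const_mul (Real.sqrt (2 * Real.pi))⁻¹
  have h3 : HasDerivAt (fun e : ℝ => Real.exp (s * e / σ) / (2 * σ))
      (Real.exp (s * e / σ) * (s * 1 / σ) / (2 * σ)) e :=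
    ((((hasDerivAt_id e).const_mul s).div_const σ).exp).div_const _
  have h4 := ((h1.const_mul (s * σ)).add (h2.const_mul (σ ^ 2 / h))).mul h3
  refine h4.congr_deriv ?_
  simp only [laplaceKeps, Function.comp, Pi.add_apply, Pi.neg_apply, Pi.pow_apply,
    Nat.add_one_sub_one, Nat.cast_ofNat, pow_one]
  generalize stdNormalCDF ((z - e) / h) = P
  generalize (Real.sqrt (2 * Real.pi))⁻¹ = c
  generalize Real.exp (-((z - e) / h) ^ 2 / 2) = G
  generalize Real.exp (s * e / σ) = E
  field_simp
  ring_nf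
  simp only [hs]
  ring

lemma tendsto_antideriv {σ h : ℝ} (hh : 0 < h) (z s : ℝ) {l : Filter ℝ}
    (hl : Tendsto (fun e : ℝ => s * e / σ) l atBot) :
    Tendsto (fun e : ℝ => (s * σ * stdNormalCDF ((z - e) / h)
        + σ ^ 2 / h * ((Real.sqrt (2 * Real.pi))⁻¹ * Real.exp (-((z - e) / h) ^ 2 / 2)))
          * (Real.exp (s * e / σ) / (2 * σ))) l (nhds 0) := by
  obtain ⟨C, hC⟩ := exists_abs_stdNormalCDF_le
  have hE : Tendsto (fun e : ℝ => Real.exp (s * e / σ) / (2 * σ)) l (nhds 0) := by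
    simpa using (Real.tendsto_exp_atBot.comp hl).div_const (2 * σ)
  refine bdd_le_mul_tendsto_zero' (|s * σ| * C + σ ^ 2 / h * ((Real.sqrt (2 * Real.pi))⁻¹ * 1))
    (Eventually.of_forall fun e => ?_) hE
  refine (abs_add_le _ _).trans (add_le_add ?_ ?_)
  · rw [abs_mul]
    exact mul_le_mul_of_nonneg_left (hC _) (abs_nonneg _)
  · rw [abs_of_nonneg (by positivity)]
    gcongr
    refine Real.exp_le_one_iff.2 ?_
    nlinarith [sq_nonneg ((z - e) / h)]

lemma integral_laplaceKeps_mul_density {σ h : ℝ} (hσ : 0 < σ) (hh : 0 < h) (z : ℝ) :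
    ∫ e : ℝ, laplaceKeps σ h ((z - e) / h) * (Real.exp (-|e| / σ) / (2 * σ))
      = stdNormalCDF (z / h) := by
  have hint := integrable_laplaceKeps_mul_density hσ h z
  have eqL : Set.EqOn
      (fun e : ℝ => laplaceKeps σ h ((z - e) / h) * (Real.exp (-|e| / σ) / (2 * σ)))
      (fun e : ℝ => laplaceKeps σ h ((z - e) / h) * (Real.exp (1 * e / σ) / (2 * σ)))
      (Set.Iic 0) := fun e he => by
    simp only [abs_of_nonpos (Set.mem_Iic.1 he), neg_neg, one_mul]
  have eqR : Set.EqOn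
      (fun e : ℝ => laplaceKeps σ h ((z - e) / h) * (Real.exp (-|e| / σ) / (2 * σ)))
      (fun e : ℝ => laplaceKeps σ h ((z - e) / h) * (Real.exp (-1 * e / σ) / (2 * σ)))
      (Set.Ioi 0) := fun e he => by
    simp only [abs_of_pos (Set.mem_Ioi.1 he), neg_one_mul]
  have hL := integral_Iic_of_hasDerivAt_of_tendsto' (a := 0)
    (fun e _ => hasDerivAt_antideriv hσ hh z 1 (by norm_num) e)
    (hint.integrableOn.congr_fun eqL measurableSet_Iic)
    (tendsto_antideriv hh z 1 (by
      simpa using tendsto_id.atBot_div_const hσ))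
  have hR := integral_Ioi_of_hasDerivAt_of_tendsto' (a := 0)
    (fun e _ => hasDerivAt_antideriv hσ hh z (-1) (by norm_num) e)
    (hint.integrableOn.congr_fun eqR measurableSet_Ioi)
    (tendsto_antideriv hh z (-1) (by
      simpa using (tendsto_neg_atTop_atBot (G := ℝ)).atBot_div_const hσ))
  rw [← intervalIntegral.integral_Iic_add_Ioi (b := 0) hint.integrableOn hint.integrableOn,
    setIntegral_congr_fun measurableSet_Iic eqL, setIntegral_congr_fun measurableSet_Ioi eqR, hL, hR]
  simp only [sub_zero, mul_zero, zero_div, Real.exp_zero]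
  field_simp
  ring

theorem stmt5 {Ω : Type*} [MeasurableSpace Ω] (μ : Measure Ω) [IsProbabilityMeasure μ]
    (σ h z x : ℝ) (hσ : 0 < σ) (hh : 0 < h)
    (X ε : Ω → ℝ) (hX : Measurable X) (hε : Measurable ε)
    (hεlaw : Measure.map ε μ
      = MeasureTheory.volume.withDensity fun e => ENNReal.ofReal (Real.exp (-|e| / σ) / (2 * σ)))
    (hindep : IndepFun X ε μ) :
    -- E[𝒦^ε_h((z-ε)/h)] = ∫ 𝒦^ε_h((z-e)/h) f_ε(e) de = Φ(z/h)
    ((∫ ω, laplaceKeps σ h ((z - ε ω) / h) ∂μ)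
        = ∫ e : ℝ, laplaceKeps σ h ((z - e) / h) * (Real.exp (-|e| / σ) / (2 * σ))) ∧
    ((∫ e : ℝ, laplaceKeps σ h ((z - e) / h) * (Real.exp (-|e| / σ) / (2 * σ)))
        = stdNormalCDF (z / h)) ∧
    -- E[𝒦^ε_h((x-Y)/h) | X] = Φ((x-X)/h) a.s., where Y = X + ε
    (μ[(fun ω => laplaceKeps σ h ((x - (X ω + ε ω)) / h)) |
        MeasurableSpace.comap X inferInstance]
      =ᵐ[μ] fun ω => stdNormalCDF ((x - X ω) / h)) ∧
    -- hence E[𝒦^ε_h((x-Y)/h)] = E[Φ((x-X)/h)]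
    ((∫ ω, laplaceKeps σ h ((x - (X ω + ε ω)) / h) ∂μ)
        = ∫ ω, stdNormalCDF ((x - X ω) / h) ∂μ) := by
  -- expectation against the law of `ε` is integration against its density
  have hlaw : ∀ w : ℝ, ∫ e, laplaceKeps σ h ((w - e) / h) ∂(Measure.map ε μ)
      = ∫ e : ℝ, laplaceKeps σ h ((w - e) / h) * (Real.exp (-|e| / σ) / (2 * σ)) := by
    intro w
    rw [hεlaw, integral_withDensity_eq_integral_toReal_smul (by fun_prop)
      (ae_of_all _ fun _ => ENNReal.ofReal_lt_top)]
    refine integral_congr_ae (ae_of_all _ fun e => ?_)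
    simp only [smul_eq_mul]
    rw [ENNReal.toReal_ofReal (by positivity), mul_comm]
  have hKc := continuous_laplaceKeps σ h
  have hcond : μ[(fun ω => laplaceKeps σ h ((x - (X ω + ε ω)) / h)) |
        MeasurableSpace.comap X inferInstance]
      =ᵐ[μ] fun ω => stdNormalCDF ((x - X ω) / h) := by
    let F : ℝ × ℝ → ℝ := fun p => laplaceKeps σ h ((x - (p.1 + p.2)) / h)
    have hF : Continuous F := by fun_prop
    obtain ⟨C, hC⟩ := exists_abs_laplaceKeps_le σ h
    have hFint : Integrable (fun ω => F (X ω, ε ω)) μ :=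
      Integrable.of_bound
        (hF.measurable.comp (hX.prodMk hε)).aestronglyMeasurable C (ae_of_all _ fun ω => hC _)
    have : IsProbabilityMeasure (Measure.map ε μ) := Measure.isProbabilityMeasure_map hε.aemeasurable
    have hprod : Measure.map (fun ω => (X ω, ε ω)) μ
        = Measure.map X μ ⊗ₘ Kernel.const ℝ (Measure.map ε μ) := by
      rw [Measure.compProd_const]
      exact (indepFun_iff_map_prod_eq_prod_map_map hX.aemeasurable hε.aemeasurable).1 hindep
    have hker := ae_of_ae_map hX.aemeasurable
      (condDistrib_ae_eq_of_measure_eq_compProd X hε.aemeasurable hprod)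
    refine (condExp_prod_ae_eq_integral_condDistrib hX hε.aemeasurable
      hF.stronglyMeasurable hFint).trans ?_
    filter_upwards [hker] with ω hω
    rw [hω, Kernel.const_apply]
    simp only [F, ← sub_sub]
    rw [hlaw, integral_laplaceKeps_mul_density hσ hh]
  refine ⟨?_, integral_laplaceKeps_mul_density hσ hh z, hcond, ?_⟩
  · rw [← hlaw z, integral_map hε.aemeasurable
      (Continuous.aestronglyMeasurable (by fun_prop))]
  · rw [← integral_condExp hX.comap_le]
    exact integral_congr_ae hcond
end

section
/- Let F be a distribution function on ℝ with density f such that f is bounded and differentiable, f′ is bounded, and f′ is continuous at the point x. Then, with φ denoting the standard normal density, lim_{h→0⁺} h^{−2} ( ∫_ℝ φ(z) F(x + zh) dz − F(x) ) = f′(x)/2; that is, the Gaussian-kernel smoothing bias satisfies ∫_ℝ φ(z) F(x+zh) dz − F(x) = (h²/2) f′(x) + o(h²) as h → 0⁺. -/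
open Filter

/-!
Let `R u = F (x + u) - F x - f x * u` be the first-order Taylor remainder of `F` at `x`. Since
`F' = f`, we have `R' u = f (x + u) - f x`, so boundedness of `f'` gives `|R u| ≤ C u²` for all `u`,
and differentiability of `f` at `x` gives `R u - f' x / 2 * u² = o(u²)` as `u → 0`
(both through `abs_le_mul_sq_of_deriv`). The standard Gaussian has mean zero, so the bias divided by
`h²` is the Gaussian integral of `R (z h) / h²`. This integrand is dominated by `C z²` and tends to
`f' x / 2 * z²`; dominated convergence and the second moment `1` conclude.
-/

open MeasureTheory ProbabilityTheory Topology

/-- The mean value inequality for a function vanishing at `0` with derivative of size `O(u)`,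
restricted to a symmetric interval. -/
lemma abs_le_mul_sq_of_deriv {g g' : ℝ → ℝ} {c r : ℝ} (hc : 0 ≤ c) (h0 : g 0 = 0)
    (hg : ∀ u, HasDerivAt g (g' u) u) (hb : ∀ u, |u| ≤ r → |g' u| ≤ c * |u|)
    {u : ℝ} (hu : |u| ≤ r) : |g u| ≤ c * u ^ 2 := by
  have key := (convex_Icc (-|u|) |u|).norm_image_sub_le_of_norm_hasDerivWithin_le
    (f := g) (f' := g') (C := c * |u|) (x := 0) (y := u)
    (fun y _ => (hg y).hasDerivWithinAt)
    (fun y hy => by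
      have hy' : |y| ≤ |u| := abs_le.2 hy
      exact (hb y (hy'.trans hu)).trans (mul_le_mul_of_nonneg_left hy' hc))
    ⟨by simp, by simp⟩ (abs_le.1 le_rfl)
  simp only [h0, sub_zero, Real.norm_eq_abs] at key
  calc |g u| ≤ c * |u| * |u| := key
    _ = c * u ^ 2 := by rw [mul_assoc, ← sq, sq_abs]

lemma hasDerivAt_of_eq_integral_Iio {f F : ℝ → ℝ} (hint : Integrable f) (hf : Continuous f)
    (hF : ∀ y, F y = ∫ t in Set.Iio y, f t) (y : ℝ) : HasDerivAt F (f y) y := by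
  have hFy : F = fun y => F 0 + ∫ t in (0 : ℝ)..y, f t := by
    funext y
    rw [← intervalIntegral.integral_Iic_sub_Iic hint.integrableOn hint.integrableOn, hF, hF,
      integral_Iic_eq_integral_Iio, integral_Iic_eq_integral_Iio]
    ring
  rw [hFy]
  exact (hf.integral_hasStrictDerivAt 0 y).hasDerivAt.const_add _

lemma integrable_sq_gaussianReal : Integrable (fun z : ℝ => z ^ 2) (gaussianReal 0 1) :=
  (memLp_id_gaussianReal 2).integrable_sq

lemma integral_sq_gaussianReal : ∫ z : ℝ, z ^ 2 ∂(gaussianReal 0 1) = 1 := by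
  have h := variance_fun_id_gaussianReal (μ := 0) (v := 1)
  rw [variance_of_integral_eq_zero (by fun_prop) (by simp)] at h
  simpa using h

/-- Gaussian-kernel smoothing bias for a distribution function:
`∫ φ(z) F(x+zh) dz - F(x) = (h²/2) f'(x) + o(h²)` as `h → 0⁺`. -/
theorem stmt6 (f f' F : ℝ → ℝ) (x : ℝ)
    (hdens : ∀ t, 0 ≤ f t) (hint : MeasureTheory.Integrable f)
    (htotal : (∫ t : ℝ, f t) = 1)
    (hF : ∀ y, F y = ∫ t in Set.Iio y, f t)
    (hderiv : ∀ t, HasDerivAt f (f' t) t)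
    (hfbdd : ∃ C, ∀ t, |f t| ≤ C) (hf'bdd : ∃ C, ∀ t, |f' t| ≤ C)
    (hcont : ContinuousAt f' x) :
    Filter.Tendsto
      (fun h : ℝ =>
        ((∫ z : ℝ, (Real.sqrt (2 * Real.pi))⁻¹ * Real.exp (-z ^ 2 / 2) * F (x + z * h)) - F x)
          / h ^ 2)
      (nhdsWithin 0 (Set.Ioi 0)) (nhds (f' x / 2)) := by
  obtain ⟨C, hC⟩ := hf'bdd
  have hC0 : 0 ≤ C := (abs_nonneg _).trans (hC 0)
  have hfc : Continuous f := continuous_iff_continuousAt.2 fun t => (hderiv t).continuousAt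
  have hFd := hasDerivAt_of_eq_integral_Iio hint hfc hF
  have hFc : Continuous F := continuous_iff_continuousAt.2 fun t => (hFd t).continuousAt
  set R : ℝ → ℝ := fun u => F (x + u) - F x - f x * u with hR
  have hRc : Continuous R := by fun_prop
  have hRd : ∀ u, HasDerivAt R (f (x + u) - f x) u := fun u => by
    have h1 : HasDerivAt (fun u => F (x + u)) (f (x + u)) u := (hFd (x + u)).comp_const_add x u
    exact ((h1.sub_const (F x)).sub ((hasDerivAt_id u).const_mul (f x))).congr_deriv (by simp)
  have hRbound : ∀ u, |R u| ≤ C * u ^ 2 := fun u => by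
    refine abs_le_mul_sq_of_deriv hC0 (by simp [hR]) hRd (r := |u|) (fun v _ => ?_) le_rfl
    simpa using convex_univ.norm_image_sub_le_of_norm_hasDerivWithin_le (f := f) (f' := f')
      (C := C) (x := x) (y := x + v) (fun y _ => (hderiv y).hasDerivWithinAt)
      (fun y _ => hC y) trivial trivial
  have hRo : (fun u => R u - f' x / 2 * u ^ 2) =o[𝓝 0] fun u => u ^ 2 := by
    rw [Asymptotics.isLittleO_iff]
    intro c hc
    have h1 := (hasDerivAt_iff_isLittleO_nhds_zero.1 (hderiv x)).def hc
    obtain ⟨r, hr, hball⟩ := Metric.eventually_nhds_iff.1 h1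
    filter_upwards [Metric.ball_mem_nhds (0 : ℝ) (half_pos hr)] with u hu
    have hu' : |u| ≤ r / 2 := by simpa using (Metric.mem_ball.1 hu).le
    have hd : ∀ v, HasDerivAt (fun u => R u - f' x / 2 * u ^ 2)
        (f (x + v) - f x - v * f' x) v := fun v => by
      refine ((hRd v).sub (((hasDerivAt_id v).pow 2).const_mul (f' x / 2))).congr_deriv ?_
      simp
      ring
    have := abs_le_mul_sq_of_deriv hc.le (by simp [hR]) hd (r := r / 2) (fun v hv => by
      have := hball (y := v) (by rw [dist_zero_right, Real.norm_eq_abs]; linarith)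
      simpa using this) hu'
    simpa using this
  have hRint : ∀ h, Integrable (fun z => R (z * h)) (gaussianReal 0 1) := fun h => by
    refine (integrable_sq_gaussianReal.const_mul (C * h ^ 2)).mono'
      (by fun_prop) (Eventually.of_forall fun z => ?_)
    refine (hRbound (z * h)).trans_eq ?_
    ring
  have hid : Integrable (fun z : ℝ => z) (gaussianReal 0 1) :=
    (memLp_id_gaussianReal 1).integrable le_rfl
  -- The linear Taylor term integrates to zero against the centred Gaussian.
  have hrew : ∀ h : ℝ,
      ((∫ z : ℝ, (Real.sqrt (2 * Real.pi))⁻¹ * Real.exp (-z ^ 2 / 2) * F (x + z * h)) - F x)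
        / h ^ 2 = ∫ z, R (z * h) / h ^ 2 ∂(gaussianReal 0 1) := fun h => by
    have h1 : (∫ z : ℝ, (Real.sqrt (2 * Real.pi))⁻¹ * Real.exp (-z ^ 2 / 2) * F (x + z * h))
        = ∫ z, F (x + z * h) ∂(gaussianReal 0 1) := by
      rw [integral_gaussianReal_eq_integral_smul one_ne_zero]
      simp [gaussianPDFReal]
    have h2 : ∀ z, F (x + z * h) = R (z * h) + (F x + f x * h * z) := fun z => by
      simp only [hR]; ring
    rw [h1, integral_div]
    congr 1
    simp_rw [h2]
    have h3 : Integrable (fun z => F x + f x * h * z) (gaussianReal 0 1) :=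
      (integrable_const _).add (hid.const_mul _)
    rw [integral_add (hRint h) h3,
      integral_add (integrable_const _) (hid.const_mul _), integral_const_mul]
    simp
  simp_rw [hrew]
  have hlim : f' x / 2 = ∫ z, f' x / 2 * z ^ 2 ∂(gaussianReal 0 1) := by
    rw [integral_const_mul, integral_sq_gaussianReal, mul_one]
  rw [hlim]
  refine tendsto_integral_filter_of_dominated_convergence (fun z => C * z ^ 2)
    (Eventually.of_forall fun h => by fun_prop) ?_ (integrable_sq_gaussianReal.const_mul C)
    (Eventually.of_forall fun z => ?_)
  · filter_upwards [self_mem_nhdsWithin] with h hh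
    have hh' : (0 : ℝ) < h := hh
    refine Eventually.of_forall fun z => ?_
    rw [norm_div, Real.norm_eq_abs, Real.norm_of_nonneg (sq_nonneg h), div_le_iff₀ (by positivity)]
    refine (hRbound (z * h)).trans_eq ?_
    ring
  · have ht : Tendsto (fun h : ℝ => z * h) (𝓝[>] 0) (𝓝 0) := by
      have : Tendsto (fun h : ℝ => z * h) (𝓝 0) (𝓝 (z * 0)) := by
        exact (continuous_const_mul z).tendsto 0
      rw [mul_zero] at this
      exact this.mono_left nhdsWithin_le_nhds
    have h3 : (fun h => R (z * h) - f' x / 2 * (z * h) ^ 2) =o[𝓝[>] 0] fun h => h ^ 2 := by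
      refine (hRo.comp_tendsto ht).trans_isBigO ?_
      refine Asymptotics.IsBigO.of_bound (z ^ 2) (Eventually.of_forall fun h => ?_)
      simp [mul_pow]
    have h4 := h3.tendsto_div_nhds_zero.add_const (f' x / 2 * z ^ 2)
    rw [zero_add] at h4
    refine h4.congr' ?_
    filter_upwards [self_mem_nhdsWithin] with h hh
    have hh' : h ≠ 0 := ne_of_gt hh
    field_simp
    ring
end

section
/- Let σ > 0 and x ∈ ℝ. Let X be a real random variable whose density f_X is bounded and differentiable with f′_X bounded, let ε be an independent Laplace(σ) random variable, and set Y = X + ε with density f_Y continuous at x. Then lim_{h→0⁺} h³ · Var( 𝒦^ε_h((x − Y)/h) ) = (σ⁴/(4√π)) f_Y(x); that is, Var(𝒦^ε_h((x−Y)/h)) = (σ⁴/(4√π)) h^{−3} f_Y(x) + o(h^{−3}) as h → 0⁺. -/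
/-!
Write `𝒦^ε_h = Φ + h⁻² ψ` with `ψ(u) = (2π)^{-1/2} σ² u e^{-u²/2}`. Both `Φ` and `ψ` are bounded,
so in `h³ Var 𝒦^ε_h((x - Y)/h) = h³ Var Φ + 2 h Cov(Φ, ψ) + h⁻¹ Var ψ` only the last term matters.
If `Y` has a bounded continuous density `g`, then `h⁻¹ E[w((x - Y)/h)] → g(x) ∫ w` for every
integrable `w` (`tendsto_rescaled_integral`). Applied to `ψ²` this gives the limit
`g(x) ∫ ψ² = σ⁴ g(x) / (4 √π)` of `h⁻¹ E[ψ²]`, and applied to `ψ` it gives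
`h⁻¹ (E ψ)² = h (h⁻¹ E ψ)² → 0`.

The function `fY` is only known to be continuous at `x`, and it need not be measurable or
nonnegative elsewhere, so the argument is run with the explicit density `g(y) = E[f_ε(y - X)]`,
which is continuous, bounded and strictly positive. Comparing the mass of small balls around `x`
gives `max (fY x) 0 = g x` (`ofReal_le_of_withDensity_eq`), and positivity of `g` gives `fY x = g x`.
-/

open MeasureTheory ProbabilityTheory Filter

open scoped Topology ENNReal

/-! ### The density of `X + ε` -/

/-- The density of a sum of an independent pair `X`, `ε`, where `ε` has density `q`:
`y ↦ E[q (y - X)]`, with `P` the law of `X`. -/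
noncomputable def sumDensity (P : Measure ℝ) (q : ℝ → ℝ) (y : ℝ) : ℝ := ∫ t, q (-t + y) ∂P

lemma continuous_sumDensity (P : Measure ℝ) [IsProbabilityMeasure P] {q : ℝ → ℝ}
    (hq : Continuous q) {M : ℝ} (hM : ∀ t, |q t| ≤ M) : Continuous (sumDensity P q) := by
  refine continuous_of_dominated (bound := fun _ => M) ?_ ?_ (integrable_const M) ?_
  · intro y
    exact (by fun_prop : Continuous fun t => q (-t + y)).aestronglyMeasurable
  · intro y
    exact Eventually.of_forall fun t => hM _
  · exact Eventually.of_forall fun t => by fun_prop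

lemma integrable_shift (P : Measure ℝ) [IsProbabilityMeasure P] {q : ℝ → ℝ}
    (hq : Continuous q) {M : ℝ} (hM : ∀ t, |q t| ≤ M) (y : ℝ) :
    Integrable (fun t => q (-t + y)) P :=
  Integrable.of_bound (by fun_prop : Continuous fun t => q (-t + y)).aestronglyMeasurable M
    (Eventually.of_forall fun t => hM _)

lemma sumDensity_le (P : Measure ℝ) [IsProbabilityMeasure P] {q : ℝ → ℝ}
    {M : ℝ} (hM : ∀ t, |q t| ≤ M) (y : ℝ) : |sumDensity P q y| ≤ M := by
  have := norm_integral_le_of_norm_le_const (μ := P) (f := fun t => q (-t + y)) (C := M)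
    (Eventually.of_forall fun t => hM _)
  simpa [sumDensity] using this

lemma sumDensity_pos (P : Measure ℝ) [IsProbabilityMeasure P] {q : ℝ → ℝ}
    (hq : Continuous q) {M : ℝ} (hM : ∀ t, |q t| ≤ M) (hpos : ∀ t, 0 < q t) (y : ℝ) :
    0 < sumDensity P q y := by
  unfold sumDensity
  rw [integral_pos_iff_support_of_nonneg (fun t => (hpos _).le) (integrable_shift P hq hM y)]
  have : Function.support (fun t => q (-t + y)) = Set.univ := by
    ext t
    simp [(hpos (-t + y)).ne']
  simp [this]

lemma map_add_eq_withDensity_sumDensity {Ω : Type*} [MeasurableSpace Ω] (μ : Measure Ω)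
    [IsProbabilityMeasure μ] {X ε : Ω → ℝ} (hX : Measurable X) (hε : Measurable ε)
    (hindep : IndepFun X ε μ) {p q : ℝ → ℝ} (hp : Measurable p) (hq : Continuous q)
    {M : ℝ} (hM : ∀ t, |q t| ≤ M) (hq0 : ∀ t, 0 ≤ q t)
    (hXd : Measure.map X μ = volume.withDensity fun t => ENNReal.ofReal (p t))
    (hεd : Measure.map ε μ = volume.withDensity fun t => ENNReal.ofReal (q t)) :
    Measure.map (fun ω => X ω + ε ω) μ
      = volume.withDensity fun y => ENNReal.ofReal (sumDensity (Measure.map X μ) q y) := by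
  have : IsProbabilityMeasure (Measure.map X μ) := Measure.isProbabilityMeasure_map hX.aemeasurable
  have h1 := hindep.map_add_eq_map_conv_map hX hε
  have h2 : Measure.map (fun ω => X ω + ε ω) μ = Measure.map (X + ε) μ := rfl
  rw [h2, h1, hεd]
  conv_lhs => rw [hXd]
  rw [conv_withDensity_eq_lconvolution (by fun_prop) (by fun_prop)]
  congr 1
  ext y
  rw [lconvolution_def, sumDensity, ofReal_integral_eq_lintegral_ofReal
    (integrable_shift _ hq hM y) (Eventually.of_forall fun t => hq0 _), hXd,
    lintegral_withDensity_eq_lintegral_mul _ (by fun_prop) (by fun_prop)]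
  rfl

/-! ### Pointwise comparison of densities -/

/-- One half of the fact that two densities of the same measure have equal positive parts at a
point where both are continuous. No measurability is needed, since the densities are only compared
with constants on a small ball. -/
lemma ofReal_le_of_withDensity_eq {f g : ℝ → ℝ} {x : ℝ} (hf : ContinuousAt f x)
    (hg : ContinuousAt g x)
    (h : (volume.withDensity fun t => ENNReal.ofReal (f t))
      = volume.withDensity fun t => ENNReal.ofReal (g t)) :
    ENNReal.ofReal (f x) ≤ ENNReal.ofReal (g x) := by
  by_contra! hlt
  obtain ⟨c, hgc, hcf⟩ := exists_between hlt
  obtain ⟨d, hcd, hdf⟩ := exists_between hcf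
  have hf' : ∀ᶠ t in 𝓝 x, d < ENNReal.ofReal (f t) :=
    (ENNReal.continuous_ofReal.continuousAt.comp hf).eventually_const_lt hdf
  have hg' : ∀ᶠ t in 𝓝 x, ENNReal.ofReal (g t) < c :=
    (ENNReal.continuous_ofReal.continuousAt.comp hg).eventually_lt_const hgc
  obtain ⟨r, hr, hball⟩ := Metric.eventually_nhds_iff_ball.1 (hf'.and hg')
  have hB : MeasurableSet (Metric.ball x r) := measurableSet_ball
  have hpos : volume (Metric.ball x r) ≠ 0 := (Metric.measure_ball_pos _ _ hr).ne'
  have hfin : volume (Metric.ball x r) ≠ ∞ := measure_ball_lt_top.ne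
  have h1 : d * volume (Metric.ball x r) ≤ c * volume (Metric.ball x r) := by
    calc d * volume (Metric.ball x r) = ∫⁻ _ in Metric.ball x r, d := by simp
      _ ≤ ∫⁻ t in Metric.ball x r, ENNReal.ofReal (f t) :=
        setLIntegral_mono' hB fun t ht => (hball t ht).1.le
      _ = ∫⁻ t in Metric.ball x r, ENNReal.ofReal (g t) := by
        rw [← withDensity_apply _ hB, h, withDensity_apply _ hB]
      _ ≤ ∫⁻ _ in Metric.ball x r, c := setLIntegral_mono' hB fun t ht => (hball t ht).2.le
      _ = c * volume (Metric.ball x r) := by simp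
  exact absurd ((ENNReal.mul_le_mul_iff_left hpos hfin).1 h1) (not_le.2 hcd)

/-! ### Rescaled integrals -/

/-- Approximate-identity limit: substituting `y = x - h u` turns the left-hand side into
`∫ w(u) g(x - h u) du`, to which dominated convergence applies. -/
lemma tendsto_rescaled_integral {g w : ℝ → ℝ} (hg : Continuous g) {M : ℝ} (hM : ∀ t, |g t| ≤ M)
    (hw : Integrable w) (x : ℝ) :
    Tendsto (fun h : ℝ => h⁻¹ * ∫ y, g y * w ((x - y) / h)) (𝓝[>] 0) (𝓝 (g x * ∫ u, w u)) := by
  have key : ∀ h : ℝ, 0 < h →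
      ∫ u, g (x - h * u) * w u = h⁻¹ * ∫ y, g y * w ((x - y) / h) := by
    intro h hh
    have h1 := Measure.integral_comp_mul_left (fun v => g (x - v) * w (v / h)) h
    have h2 := integral_sub_left_eq_self (fun y => g y * w ((x - y) / h)) volume x
    simp only [sub_sub_cancel] at h2
    rw [← h2]
    rw [abs_of_pos (inv_pos.2 hh), smul_eq_mul] at h1
    rw [← h1]
    congr 1
    ext u
    rw [mul_div_cancel_left₀ _ hh.ne']
  have hlim : Tendsto (fun h : ℝ => ∫ u, g (x - h * u) * w u) (𝓝[>] 0)
      (𝓝 (∫ u, g x * w u)) := by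
    refine tendsto_integral_filter_of_dominated_convergence (fun u => M * |w u|) ?_ ?_
      (hw.abs.const_mul M) ?_
    · refine Eventually.of_forall fun h => ?_
      exact (by fun_prop : Continuous fun u => g (x - h * u)).aestronglyMeasurable.mul
        hw.aestronglyMeasurable
    · refine Eventually.of_forall fun h => Eventually.of_forall fun u => ?_
      rw [Real.norm_eq_abs, abs_mul]
      exact mul_le_mul_of_nonneg_right (hM _) (abs_nonneg _)
    · refine Eventually.of_forall fun u => ?_
      have : Continuous fun h : ℝ => g (x - h * u) * w u := by fun_prop
      simpa using (this.tendsto 0).mono_left nhdsWithin_le_nhds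
  rw [integral_const_mul] at hlim
  refine hlim.congr' ?_
  filter_upwards [self_mem_nhdsWithin] with h hh using key h hh

/-! ### The two parts of the kernel -/

lemma integrable_exp_neg_sq_div_two : Integrable fun t : ℝ => Real.exp (-t ^ 2 / 2) := by
  refine (integrable_exp_neg_mul_sq (b := 1 / 2) (by norm_num)).congr
    (Eventually.of_forall fun t => ?_)
  simp only
  congr 1
  ring

lemma measurable_stdNormalCDF : Measurable stdNormalCDF := by
  refine Monotone.measurable fun a b hab => ?_
  refine mul_le_mul_of_nonneg_left ?_ (by positivity)
  exact setIntegral_mono_set integrable_exp_neg_sq_div_two.integrableOn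
    (Eventually.of_forall fun t => (Real.exp_pos _).le)
    (Set.Iio_subset_Iio hab).eventuallyLE

lemma exists_bound_stdNormalCDF : ∃ B, ∀ u, |stdNormalCDF u| ≤ B := by
  refine ⟨(Real.sqrt (2 * Real.pi))⁻¹ * ∫ t : ℝ, Real.exp (-t ^ 2 / 2), fun u => ?_⟩
  have h0 : 0 ≤ ∫ t in Set.Iio u, Real.exp (-t ^ 2 / 2) :=
    integral_nonneg fun t => (Real.exp_pos _).le
  rw [stdNormalCDF, abs_of_nonneg (by positivity)]
  refine mul_le_mul_of_nonneg_left ?_ (by positivity)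
  exact setIntegral_le_integral integrable_exp_neg_sq_div_two
    (Eventually.of_forall fun t => (Real.exp_pos _).le)

/-- The singular part `ψ(u) = (2π)^{-1/2} σ² u e^{-u²/2}` of the integrated kernel, so that
`𝒦^ε_h = Φ + h⁻² ψ`. -/
noncomputable def singularPart (σ u : ℝ) : ℝ :=
  (Real.sqrt (2 * Real.pi))⁻¹ * σ ^ 2 * (u * Real.exp (-u ^ 2 / 2))

lemma laplaceKeps_eq (σ h u : ℝ) :
    laplaceKeps σ h u = stdNormalCDF u + (h ^ 2)⁻¹ * singularPart σ u := by
  unfold laplaceKeps singularPart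
  ring

lemma measurable_singularPart (σ : ℝ) : Measurable (singularPart σ) := by
  unfold singularPart
  fun_prop

lemma abs_singularPart_le (σ u : ℝ) :
    |singularPart σ u| ≤ (Real.sqrt (2 * Real.pi))⁻¹ * σ ^ 2 := by
  have h1 : |u * Real.exp (-u ^ 2 / 2)| ≤ 1 := by
    rw [abs_mul, abs_of_pos (Real.exp_pos _), neg_div, Real.exp_neg, ← div_eq_mul_inv,
      div_le_one (Real.exp_pos _)]
    have := Real.add_one_le_exp (u ^ 2 / 2)
    have h3 : u ^ 2 = |u| ^ 2 := (sq_abs u).symm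
    nlinarith [sq_nonneg (|u| - 1)]
  have hc : 0 ≤ (Real.sqrt (2 * Real.pi))⁻¹ * σ ^ 2 := by positivity
  rw [singularPart, abs_mul, abs_of_nonneg hc]
  exact mul_le_of_le_one_right hc h1

lemma integrable_singularPart (σ : ℝ) : Integrable (singularPart σ) := by
  refine Integrable.const_mul ?_ _
  refine (integrable_mul_exp_neg_mul_sq (b := 1 / 2) (by norm_num)).congr
    (Eventually.of_forall fun t => ?_)
  simp only
  congr 2
  ring

lemma singularPart_sq (σ u : ℝ) :
    singularPart σ u ^ 2 = σ ^ 4 / (2 * Real.pi) * (u ^ 2 * Real.exp (-u ^ 2)) := by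
  have hs : (Real.sqrt (2 * Real.pi))⁻¹ ^ 2 = (2 * Real.pi)⁻¹ := by
    rw [inv_pow, Real.sq_sqrt (by positivity)]
  have he : Real.exp (-u ^ 2 / 2) ^ 2 = Real.exp (-u ^ 2) := by
    rw [← Real.exp_nat_mul]
    congr 1
    push_cast
    ring
  rw [singularPart, mul_pow, mul_pow, mul_pow, hs, he]
  ring

lemma integrable_singularPart_sq (σ : ℝ) : Integrable fun u => singularPart σ u ^ 2 := by
  simp only [singularPart_sq]
  refine Integrable.const_mul ?_ _
  simpa using integrable_rpow_mul_exp_neg_mul_sq (b := 1) one_pos (s := 2) (by norm_num)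

lemma integral_sq_mul_exp_neg_sq :
    ∫ u : ℝ, u ^ 2 * Real.exp (-u ^ 2) = Real.sqrt Real.pi / 2 := by
  have h1 := integral_comp_abs (f := fun u : ℝ => u ^ 2 * Real.exp (-u ^ 2))
  simp only [sq_abs] at h1
  have h2 := integral_rpow_mul_exp_neg_rpow (p := 2) (q := 2) (by norm_num) (by norm_num)
  have h3 : Real.Gamma ((2 + 1) / 2) = Real.sqrt Real.pi / 2 := by
    rw [show ((2 : ℝ) + 1) / 2 = 1 / 2 + 1 by norm_num, Real.Gamma_add_one (by norm_num),
      Real.Gamma_one_half_eq]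
    ring
  simp only [Real.rpow_two] at h2
  rw [h1, h2, h3]
  ring

lemma integral_singularPart_sq (σ : ℝ) :
    ∫ u, singularPart σ u ^ 2 = σ ^ 4 / (4 * Real.sqrt Real.pi) := by
  simp only [singularPart_sq]
  rw [integral_const_mul, integral_sq_mul_exp_neg_sq]
  have hpi : Real.sqrt Real.pi ^ 2 = Real.pi := Real.sq_sqrt Real.pi_pos.le
  have h0 : Real.sqrt Real.pi ≠ 0 := (Real.sqrt_pos.2 Real.pi_pos).ne'
  rw [← hpi, Real.sqrt_sq (Real.sqrt_nonneg _)]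
  field_simp
  ring

/-! ### Asymptotics of the variance -/

lemma variance_add_mul {Ω : Type*} [MeasurableSpace Ω] {μ : Measure Ω} [IsProbabilityMeasure μ]
    {A B : Ω → ℝ} (hA : MemLp A 2 μ) (hB : MemLp B 2 μ) (c : ℝ) :
    variance (fun ω => A ω + c * B ω) μ
      = variance A μ + 2 * c * covariance A B μ + c ^ 2 * variance B μ := by
  have h := variance_fun_add hA (hB.const_mul c)
  rw [h, variance_const_mul, covariance_const_mul_right]
  ring

/-- The asymptotics of the variance for any `Y` with a bounded continuous density `g`. -/
lemma tendsto_variance_laplaceKeps {Ω : Type*} [MeasurableSpace Ω] (μ : Measure Ω)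
    [IsProbabilityMeasure μ] (σ x : ℝ) {Y : Ω → ℝ} (hY : Measurable Y) {g : ℝ → ℝ}
    (hg : Continuous g) (hg0 : ∀ t, 0 ≤ g t) {M : ℝ} (hM : ∀ t, |g t| ≤ M)
    (hYd : Measure.map Y μ = volume.withDensity fun t => ENNReal.ofReal (g t)) :
    Tendsto (fun h : ℝ => h ^ 3 * variance (fun ω => laplaceKeps σ h ((x - Y ω) / h)) μ)
      (𝓝[>] 0) (𝓝 (σ ^ 4 / (4 * Real.sqrt Real.pi) * g x)) := by
  obtain ⟨B, hB⟩ := exists_bound_stdNormalCDF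
  set D := (Real.sqrt (2 * Real.pi))⁻¹ * σ ^ 2
  have hB0 : 0 ≤ B := (abs_nonneg _).trans (hB 0)
  have hD0 : 0 ≤ D := (abs_nonneg _).trans (abs_singularPart_le σ 0)
  set A : ℝ → Ω → ℝ := fun h ω => stdNormalCDF ((x - Y ω) / h) with hAdef
  set S : ℝ → Ω → ℝ := fun h ω => singularPart σ ((x - Y ω) / h) with hSdef
  have hAm : ∀ h, Measurable (A h) := fun h => measurable_stdNormalCDF.comp (by fun_prop)
  have hSm : ∀ h, Measurable (S h) := fun h => (measurable_singularPart σ).comp (by fun_prop)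
  have hA2 : ∀ h, MemLp (A h) 2 μ := fun h => MemLp.of_bound (hAm h).aestronglyMeasurable B
    (Eventually.of_forall fun ω => hB _)
  have hS2 : ∀ h, MemLp (S h) 2 μ := fun h => MemLp.of_bound (hSm h).aestronglyMeasurable D
    (Eventually.of_forall fun ω => abs_singularPart_le σ _)
  have bound : ∀ {F : Ω → ℝ} {C : ℝ}, (∀ ω, |F ω| ≤ C) → |∫ ω, F ω ∂μ| ≤ C := by
    intro F C hF
    simpa using norm_integral_le_of_norm_le_const (μ := μ) (f := F) (C := C)
      (Eventually.of_forall fun ω => hF ω)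
  -- Expectations of functions of `(x - Y) / h` as Lebesgue integrals against `g`.
  have transfer : ∀ (w : ℝ → ℝ), Measurable w → ∀ h : ℝ,
      ∫ ω, w ((x - Y ω) / h) ∂μ = ∫ y, g y * w ((x - y) / h) := by
    intro w hw h
    have hwm : Measurable fun y => w ((x - y) / h) := hw.comp (by fun_prop)
    rw [← integral_map (f := fun y => w ((x - y) / h)) hY.aemeasurable hwm.aestronglyMeasurable,
      hYd, integral_withDensity_eq_integral_toReal_smul (by fun_prop)
        (Eventually.of_forall fun t => ENNReal.ofReal_lt_top)]
    simp only [ENNReal.toReal_ofReal (hg0 _), smul_eq_mul]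
  have lim1 : Tendsto (fun h : ℝ => h⁻¹ * ∫ ω, S h ω ∂μ) (𝓝[>] 0)
      (𝓝 (g x * ∫ u, singularPart σ u)) := by
    simp only [hSdef, transfer _ (measurable_singularPart σ)]
    exact tendsto_rescaled_integral hg hM (integrable_singularPart σ) x
  have lim2 : Tendsto (fun h : ℝ => h⁻¹ * ∫ ω, S h ω ^ 2 ∂μ) (𝓝[>] 0)
      (𝓝 (g x * (σ ^ 4 / (4 * Real.sqrt Real.pi)))) := by
    rw [← integral_singularPart_sq]
    simp only [hSdef, transfer (fun u => singularPart σ u ^ 2)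
      ((measurable_singularPart σ).pow_const 2)]
    exact tendsto_rescaled_integral hg hM (integrable_singularPart_sq σ) x
  have hid : Tendsto (fun h : ℝ => h) (𝓝[>] 0) (𝓝 0) := tendsto_id.mono_left nhdsWithin_le_nhds
  have limS : Tendsto (fun h : ℝ => h⁻¹ * variance (S h) μ) (𝓝[>] 0)
      (𝓝 (g x * (σ ^ 4 / (4 * Real.sqrt Real.pi)))) := by
    have h1 := lim2.sub (hid.mul (lim1.pow 2))
    rw [zero_mul, sub_zero] at h1
    refine h1.congr' ?_
    filter_upwards [self_mem_nhdsWithin] with h hh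
    have hne : h ≠ 0 := (Set.mem_Ioi.1 hh).ne'
    rw [variance_eq_sub (hS2 h)]
    simp only [Pi.pow_apply]
    field_simp
  have limA : Tendsto (fun h : ℝ => h ^ 3 * variance (A h) μ) (𝓝[>] 0) (𝓝 0) := by
    have h3 : Tendsto (fun h : ℝ => h ^ 3) (𝓝[>] 0) (𝓝 0) := by simpa using hid.pow 3
    refine h3.zero_mul_isBoundedUnder_le (isBoundedUnder_of ⟨B ^ 2 + B ^ 2, fun h => ?_⟩)
    have e1 : |∫ ω, A h ω ^ 2 ∂μ| ≤ B ^ 2 := bound fun ω => by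
      rw [abs_pow]
      exact pow_le_pow_left₀ (abs_nonneg _) (hB _) 2
    have e2 : |∫ ω, A h ω ∂μ| ≤ B := bound fun ω => hB _
    simp only [Function.comp_apply, Real.norm_eq_abs]
    rw [variance_eq_sub (hA2 h)]
    refine (abs_sub _ _).trans (add_le_add e1 ?_)
    rw [abs_pow]
    exact pow_le_pow_left₀ (abs_nonneg _) e2 2
  have limC : Tendsto (fun h : ℝ => (2 * h) * covariance (A h) (S h) μ) (𝓝[>] 0) (𝓝 0) := by
    have h3 : Tendsto (fun h : ℝ => 2 * h) (𝓝[>] 0) (𝓝 0) := by simpa using hid.const_mul 2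
    refine h3.zero_mul_isBoundedUnder_le (isBoundedUnder_of ⟨B * D + B * D, fun h => ?_⟩)
    have e1 : |∫ ω, A h ω * S h ω ∂μ| ≤ B * D := bound fun ω => by
      rw [abs_mul]
      exact mul_le_mul (hB _) (abs_singularPart_le σ _) (abs_nonneg _) hB0
    have e2 : |∫ ω, A h ω ∂μ| ≤ B := bound fun ω => hB _
    have e3 : |∫ ω, S h ω ∂μ| ≤ D := bound fun ω => abs_singularPart_le σ _
    simp only [Function.comp_apply, Real.norm_eq_abs]
    rw [covariance_eq_sub (hA2 h) (hS2 h)]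
    refine (abs_sub _ _).trans (add_le_add e1 ?_)
    rw [abs_mul]
    exact mul_le_mul e2 e3 (abs_nonneg _) hB0
  have total := (limA.add limC).add limS
  rw [zero_add, zero_add, mul_comm (g x)] at total
  refine total.congr' ?_
  filter_upwards [self_mem_nhdsWithin] with h hh
  have hne : h ≠ 0 := (Set.mem_Ioi.1 hh).ne'
  have hK : (fun ω => laplaceKeps σ h ((x - Y ω) / h)) = fun ω => A h ω + (h ^ 2)⁻¹ * S h ω := by
    ext ω
    exact laplaceKeps_eq σ h _
  rw [hK, variance_add_mul (hA2 h) (hS2 h)]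
  field_simp

/-! ### The Laplace density -/

lemma continuous_laplaceDensity (σ : ℝ) :
    Continuous fun e : ℝ => Real.exp (-|e| / σ) / (2 * σ) := by
  fun_prop

lemma abs_laplaceDensity_le {σ : ℝ} (hσ : 0 < σ) (e : ℝ) :
    |Real.exp (-|e| / σ) / (2 * σ)| ≤ 1 / (2 * σ) := by
  rw [abs_of_pos (by positivity)]
  refine div_le_div_of_nonneg_right ?_ (by positivity)
  rw [Real.exp_le_one_iff]
  exact div_nonpos_of_nonpos_of_nonneg (neg_nonpos.2 (abs_nonneg e)) hσ.le

/-- `Var(𝒦^ε_h((x-Y)/h)) = (σ⁴/(4√π)) h⁻³ f_Y(x) + o(h⁻³)` as `h → 0⁺`. -/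
theorem stmt8 {Ω : Type*} [MeasurableSpace Ω] (μ : Measure Ω) [IsProbabilityMeasure μ]
    (σ x : ℝ) (hσ : 0 < σ)
    (X ε : Ω → ℝ) (hX : Measurable X) (hε : Measurable ε)
    (fX fX' fY : ℝ → ℝ)
    (hXdens : Measure.map X μ
      = MeasureTheory.volume.withDensity fun t => ENNReal.ofReal (fX t))
    (hεlaw : Measure.map ε μ
      = MeasureTheory.volume.withDensity fun e => ENNReal.ofReal (Real.exp (-|e| / σ) / (2 * σ)))
    (hindep : IndepFun X ε μ)
    (hfXderiv : ∀ t, HasDerivAt fX (fX' t) t)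
    (hfXbdd : ∃ C, ∀ t, |fX t| ≤ C) (hfX'bdd : ∃ C, ∀ t, |fX' t| ≤ C)
    (hYdens : Measure.map (fun ω => X ω + ε ω) μ
      = MeasureTheory.volume.withDensity fun t => ENNReal.ofReal (fY t))
    (hfYcont : ContinuousAt fY x) :
    Filter.Tendsto
      (fun h : ℝ => h ^ 3 * variance (fun ω => laplaceKeps σ h ((x - (X ω + ε ω)) / h)) μ)
      (nhdsWithin 0 (Set.Ioi 0)) (nhds (σ ^ 4 / (4 * Real.sqrt Real.pi) * fY x)) := by
  have hfXm : Measurable fX :=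
    (continuous_iff_continuousAt.2 fun t => (hfXderiv t).continuousAt).measurable
  have : IsProbabilityMeasure (Measure.map X μ) :=
    Measure.isProbabilityMeasure_map hX.aemeasurable
  have hqc := continuous_laplaceDensity σ
  have hqM := abs_laplaceDensity_le hσ
  have hqpos : ∀ e : ℝ, 0 < Real.exp (-|e| / σ) / (2 * σ) := fun e => by positivity
  set g := sumDensity (Measure.map X μ) fun e => Real.exp (-|e| / σ) / (2 * σ)
  have hgc : Continuous g := continuous_sumDensity _ hqc hqM
  have hgpos : ∀ y, 0 < g y := sumDensity_pos _ hqc hqM hqpos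
  have hYg : Measure.map (fun ω => X ω + ε ω) μ
      = volume.withDensity fun y => ENNReal.ofReal (g y) :=
    map_add_eq_withDensity_sumDensity μ hX hε hindep hfXm hqc hqM (fun e => (hqpos e).le)
      hXdens hεlaw
  have hfg : ENNReal.ofReal (fY x) = ENNReal.ofReal (g x) :=
    le_antisymm
      (ofReal_le_of_withDensity_eq hfYcont hgc.continuousAt (hYdens.symm.trans hYg))
      (ofReal_le_of_withDensity_eq hgc.continuousAt hfYcont (hYg.symm.trans hYdens))
  -- Positivity of `g x` excludes a negative value of `fY x`, which `ofReal` would truncate.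
  have hfYpos : 0 < fY x := ENNReal.ofReal_pos.1 (hfg ▸ ENNReal.ofReal_pos.2 (hgpos x))
  rw [(ENNReal.ofReal_eq_ofReal_iff hfYpos.le (hgpos x).le).1 hfg]
  exact tendsto_variance_laplaceKeps μ σ x (hX.add hε) hgc (fun t => (hgpos t).le)
    (sumDensity_le _ hqM) hYg
end

section
/- (Corollary 2: AMISE-optimal bandwidth with stepsize γ_n = γ₀/n.) Let σ > 0, I₁ > 0, I₂ > 0, γ₀ > 2/7, and n ≥ 1. Define, for h > 0, AMISE_n(h) = (σ⁴/(4√π)) (γ₀/(2(γ₀ − 2/7))) (γ₀/n) h^{−3} I₁ + (γ₀²/(4(γ₀ − 2/7)²)) h⁴ I₂ (this is the AMISE of Corollary 1 evaluated at α = 1, a = 1/7, ξ = 1/γ₀, γ = γ₀/n). Then AMISE_n attains its global minimum over (0,∞) uniquely at h*_n = (3σ⁴/(8√π))^{1/7} (γ₀ − 2/7)^{1/7} (I₁/I₂)^{1/7} n^{−1/7}, with minimal value AMISE_n(h*_n) = (7/12) (3σ⁴/(8√π))^{4/7} γ₀² (γ₀ − 2/7)^{−10/7} I₁^{4/7} I₂^{3/7}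 n^{−4/7}. -/
/-!
Write `s` for the claimed minimizer and `g = γ₀ - 2/7`. Since `s ^ 7 = (3σ⁴/(8√π)) g I₁ / (I₂ n)`,
the criterion takes the form `AMISE h = B * (4/3 * s ^ 7 / h ^ 3 + h ^ 4)` with
`B = γ₀² I₂ / (4 g²) > 0`. Its excess over `7/3 * B * s ^ 4`, the value at `s`, is
`B / (3 h ^ 3)` times `3 h ^ 7 - 7 s ^ 4 h ^ 3 + 4 s ^ 7`, which is `(h - s) ^ 2` times a polynomial
with positive coefficients (`profile_sub`). This gives minimality and uniqueness at once, and the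
minimal value is `7/3 * B * s ^ 4` rewritten in terms of seventh roots.
-/

/-- The exact excess of the normalized criterion over its value at `s`; the factor `(h - s) ^ 2`
reflects the double root at the critical point. -/
lemma profile_sub (s h : ℝ) (hh : 0 < h) :
    4 / 3 * s ^ 7 * (h ^ 3)⁻¹ + h ^ 4 - 7 / 3 * s ^ 4 =
      (h - s) ^ 2 * ((3 * h ^ 5 + 6 * h ^ 4 * s + 9 * h ^ 3 * s ^ 2 + 12 * h ^ 2 * s ^ 3
        + 8 * h * s ^ 4 + 4 * s ^ 5) / (3 * h ^ 3)) := by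
  field_simp
  ring

lemma rpow_div_seven {x : ℝ} (hx : 0 < x) (k : ℤ) :
    x ^ ((k : ℝ) / 7) = (x ^ ((1 : ℝ) / 7)) ^ k := by
  rw [← Real.rpow_intCast, ← Real.rpow_mul hx.le]
  congr 1
  ring

lemma seventh_root_pow {x : ℝ} (hx : 0 < x) : (x ^ ((1 : ℝ) / 7)) ^ 7 = x := by
  rw [← Real.rpow_natCast, ← Real.rpow_mul hx.le]
  norm_num

/-- Corollary 2: with stepsize `γ_n = γ₀/n`, the AMISE* of the recursive deconvolution
distribution estimator is uniquely minimized over bandwidths `h > 0` at the stated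
`h*_n`, with the stated minimal value. -/
theorem stmt17 (σ I1 I2 γ₀ : ℝ) (n : ℕ) (hσ : 0 < σ) (hI1 : 0 < I1) (hI2 : 0 < I2)
    (hγ₀ : 2 / 7 < γ₀) (hn : 1 ≤ n) :
    let AMISE : ℝ → ℝ := fun h =>
      σ ^ 4 / (4 * Real.sqrt Real.pi) * (γ₀ / (2 * (γ₀ - 2 / 7))) * (γ₀ / n) * (h ^ 3)⁻¹ * I1
        + γ₀ ^ 2 / (4 * (γ₀ - 2 / 7) ^ 2) * h ^ 4 * I2
    let hstar : ℝ := (3 * σ ^ 4 / (8 * Real.sqrt Real.pi)) ^ ((1 : ℝ) / 7)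
        * (γ₀ - 2 / 7) ^ ((1 : ℝ) / 7) * (I1 / I2) ^ ((1 : ℝ) / 7) * (n : ℝ) ^ (-(1 : ℝ) / 7)
    (∀ h : ℝ, 0 < h → AMISE hstar ≤ AMISE h) ∧
    (∀ h : ℝ, 0 < h → AMISE h = AMISE hstar → h = hstar) ∧
    AMISE hstar = 7 / 12 * (3 * σ ^ 4 / (8 * Real.sqrt Real.pi)) ^ ((4 : ℝ) / 7)
        * γ₀ ^ 2 * (γ₀ - 2 / 7) ^ (-(10 : ℝ) / 7)
        * I1 ^ ((4 : ℝ) / 7) * I2 ^ ((3 : ℝ) / 7) * (n : ℝ) ^ (-(4 : ℝ) / 7) := by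
  intro AMISE hstar
  have hg : 0 < γ₀ - 2 / 7 := by linarith
  have hγ : 0 < γ₀ := by linarith
  have hN : (0 : ℝ) < n := by exact_mod_cast hn
  have hπ : 0 < Real.sqrt Real.pi := Real.sqrt_pos.mpr Real.pi_pos
  have hC : 0 < 3 * σ ^ 4 / (8 * Real.sqrt Real.pi) := by positivity
  have hs : 0 < hstar := by positivity
  have hs7 : hstar ^ 7 =
      3 * σ ^ 4 / (8 * Real.sqrt Real.pi) * (γ₀ - 2 / 7) * (I1 / I2) * (n : ℝ)⁻¹ := by
    have e := rpow_div_seven hN (-1)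
    push_cast at e
    simp only [hstar, mul_pow]
    rw [e, seventh_root_pow hC, seventh_root_pow hg, seventh_root_pow (div_pos hI1 hI2),
      zpow_neg_one, inv_pow, seventh_root_pow hN]
  have hB : 0 < γ₀ ^ 2 * I2 / (4 * (γ₀ - 2 / 7) ^ 2) := by positivity
  have key : ∀ h : ℝ, 0 < h → AMISE h = γ₀ ^ 2 * I2 / (4 * (γ₀ - 2 / 7) ^ 2) *
      (4 / 3 * hstar ^ 7 * (h ^ 3)⁻¹ + h ^ 4) := by
    intro h hh
    rw [hs7]
    simp only [AMISE]
    generalize γ₀ - 2 / 7 = g at hg ⊢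
    field_simp
    ring
  have hmin : AMISE hstar = γ₀ ^ 2 * I2 / (4 * (γ₀ - 2 / 7) ^ 2) * (7 / 3 * hstar ^ 4) := by
    rw [key _ hs]
    have := profile_sub hstar hstar hs
    rw [sub_self, zero_pow two_ne_zero, zero_mul, sub_eq_zero] at this
    rw [this]
  have hQ : ∀ h : ℝ, 0 < h → ∃ Q : ℝ, 0 < Q ∧ AMISE h - AMISE hstar = Q * (h - hstar) ^ 2 := by
    intro h hh
    refine ⟨γ₀ ^ 2 * I2 / (4 * (γ₀ - 2 / 7) ^ 2) *
      ((3 * h ^ 5 + 6 * h ^ 4 * hstar + 9 * h ^ 3 * hstar ^ 2 + 12 * h ^ 2 * hstar ^ 3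
        + 8 * h * hstar ^ 4 + 4 * hstar ^ 5) / (3 * h ^ 3)), by positivity, ?_⟩
    rw [hmin, key h hh, ← mul_sub, profile_sub _ _ hh, mul_comm ((h - hstar) ^ 2), ← mul_assoc]
  refine ⟨fun h hh => ?_, fun h hh heq => ?_, ?_⟩
  · obtain ⟨Q, hQ0, hQe⟩ := hQ h hh
    have : 0 ≤ Q * (h - hstar) ^ 2 := by positivity
    linarith
  · obtain ⟨Q, hQ0, hQe⟩ := hQ h hh
    rw [heq, sub_self, eq_comm, mul_eq_zero] at hQe
    exact sub_eq_zero.mp (pow_eq_zero_iff two_ne_zero |>.mp (hQe.resolve_left hQ0.ne'))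
  · rw [hmin]
    have e1 := rpow_div_seven hC 4
    have e2 := rpow_div_seven hg (-10)
    have e3 := rpow_div_seven hI1 4
    have e4 := rpow_div_seven hI2 3
    have e5 := rpow_div_seven hN (-4)
    have e6 := rpow_div_seven hN (-1)
    push_cast at e1 e2 e3 e4 e5 e6
    simp only [hstar]
    rw [e1, e2, e3, e4, e5, e6, Real.div_rpow hI1.le hI2.le]
    have g7 := seventh_root_pow hg
    have q7 := seventh_root_pow hI2
    have g0 := Real.rpow_pos_of_pos hg (1 / 7)
    have q0 := Real.rpow_pos_of_pos hI2 (1 / 7)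
    have n0 := Real.rpow_pos_of_pos hN (1 / 7)
    generalize (γ₀ - 2 / 7) ^ ((1 : ℝ) / 7) = g at *
    generalize I2 ^ ((1 : ℝ) / 7) = q at *
    generalize (n : ℝ) ^ ((1 : ℝ) / 7) = m at *
    -- Eliminating `γ₀ - 2/7` and `I2` leaves an identity of monomials in the seventh roots.
    rw [← g7, ← q7]
    field_simp
    ring
end
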